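/- arXiv:1811.05353 — 7 statements merged into one kernel-verified Lean document; each statement's English description precedes it below -/
import Mathlib

section
/- Barrier function identity and bounds (proof of the Laplace-equation lemma): let N₀ ≥ 1 be an integer, ε > 0, h = ε/N₀, and x_i = i h for 0 ≤ i ≤ 2N₀. Define B_i := ε^{−1} min{x_i, 2ε − x_i} − (1/2) ε^{−2} x_i (2ε − x_i). Then for every i with 1 ≤ i ≤ 2N₀ − 1 one has (ε²/h²)(−B_{i−1} + 2B_i − B_{i+1}) = (2ε/h)·𝟙_{i=N₀} − 1, where 𝟙_{i=N₀} equals 1 if i = N₀ and 0 otherwise; moreover 0 ≤ B_i ≤ 1 for all 0 ≤ i ≤ 2N₀, B_0 = B_{2N₀} = 0, and B_{N₀} = 1/2. -/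
/-!
Since `ε = N₀ h`, the barrier is piecewise a perfect square: `B i = i² / (2 N₀²)` for `i ≤ N₀`, and
by the symmetry `i ↦ 2 N₀ - i`, `B i = (2 N₀ - i)² / (2 N₀²)` for `i ≥ N₀`. Each parabola has
constant second difference, which gives the `-1`; the kink of the `min` at `i = N₀` contributes
`2 N₀ = 2 ε / h`. The bounds and the special values can be read off the two formulas.
-/

/-- Barrier function identity and bounds from the proof of the
Laplace-equation lemma: with `h = ε / N₀`, `x i = i * h` on `[0, 2ε]`, and
`B i = ε⁻¹ * min (x i) (2ε - x i) - (1/2) * ε⁻² * x i * (2ε - x i)`, one has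
`(ε²/h²) * (-(B (i-1)) + 2 * B i - B (i+1)) = (2ε/h) * 𝟙_{i = N₀} - 1` at all
interior indices, `0 ≤ B i ≤ 1`, `B 0 = B (2N₀) = 0`, and `B N₀ = 1/2`. -/
theorem barrier_identity_and_bounds
    (N₀ : ℕ) (hN₀ : 1 ≤ N₀) (ε : ℝ) (hε : 0 < ε)
    (h : ℝ) (hh : h = ε / N₀)
    (x : ℕ → ℝ) (hx : ∀ i, x i = i * h)
    (B : ℕ → ℝ)
    (hB : ∀ i, B i = ε⁻¹ * min (x i) (2 * ε - x i)
        - (1 / 2) * (ε ^ 2)⁻¹ * x i * (2 * ε - x i)) :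
    (∀ i, 1 ≤ i → i ≤ 2 * N₀ - 1 →
      ε ^ 2 / h ^ 2 * (-(B (i - 1)) + 2 * B i - B (i + 1))
        = 2 * ε / h * (if i = N₀ then (1 : ℝ) else 0) - 1)
    ∧ (∀ i, i ≤ 2 * N₀ → 0 ≤ B i ∧ B i ≤ 1)
    ∧ B 0 = 0 ∧ B (2 * N₀) = 0 ∧ B N₀ = 1 / 2 := by
  have hN : (0 : ℝ) < N₀ := by exact_mod_cast hN₀
  have hN' : (N₀ : ℝ) ≠ 0 := hN.ne'
  have hε' : ε ≠ 0 := hε.ne'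
  have hpos : 0 < h := by rw [hh]; positivity
  have hεh : ε = N₀ * h := by rw [hh]; field_simp
  have hL : ∀ i : ℕ, i ≤ N₀ → B i = (i : ℝ) ^ 2 / (2 * (N₀ : ℝ) ^ 2) := by
    intro i hi
    have hi' : (i : ℝ) ≤ N₀ := by exact_mod_cast hi
    have hmin : (i : ℝ) * h ≤ 2 * ε - i * h := by rw [hεh]; nlinarith
    rw [hB, hx, min_eq_left hmin, hh]
    field_simp
    ring
  have hR : ∀ i : ℕ, N₀ ≤ i → B i = (2 * (N₀ : ℝ) - i) ^ 2 / (2 * (N₀ : ℝ) ^ 2) := by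
    intro i hi
    have hi' : (N₀ : ℝ) ≤ i := by exact_mod_cast hi
    have hmin : 2 * ε - i * h ≤ (i : ℝ) * h := by rw [hεh]; nlinarith
    rw [hB, hx, min_eq_right hmin, hh]
    field_simp
  have hq1 : ε ^ 2 / h ^ 2 = (N₀ : ℝ) ^ 2 := by rw [hεh]; field_simp
  have hq2 : 2 * ε / h = 2 * (N₀ : ℝ) := by rw [hεh]; field_simp
  refine ⟨?_, ?_, ?_, ?_, ?_⟩
  · intro i hi _
    obtain ⟨j, rfl⟩ : ∃ j, i = j + 1 := ⟨i - 1, by omega⟩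
    rw [hq1, hq2, Nat.add_sub_cancel]
    rcases lt_trichotomy (j + 1) N₀ with hlt | heq | hgt
    · rw [if_neg hlt.ne, hL j (by omega), hL (j + 1) (by omega), hL (j + 1 + 1) (by omega)]
      push_cast
      field_simp
      ring
    · have hj : (j : ℝ) = N₀ - 1 := by rw [← heq]; push_cast; ring
      rw [if_pos heq, hL j (by omega), hL (j + 1) (by omega), hR (j + 1 + 1) (by omega)]
      push_cast
      rw [hj]
      field_simp
      ring
    · rw [if_neg hgt.ne', hR j (by omega), hR (j + 1) (by omega), hR (j + 1 + 1) (by omega)]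
      push_cast
      field_simp
      ring
  · intro i hi
    have hi2 : (i : ℝ) ≤ 2 * N₀ := by exact_mod_cast hi
    have hi0 : (0 : ℝ) ≤ i := Nat.cast_nonneg i
    rcases le_total i N₀ with hle | hle
    · have hle' : (i : ℝ) ≤ N₀ := by exact_mod_cast hle
      rw [hL i hle]
      refine ⟨by positivity, ?_⟩
      rw [div_le_one (by positivity)]
      nlinarith
    · have hle' : (N₀ : ℝ) ≤ i := by exact_mod_cast hle
      rw [hR i hle]
      refine ⟨by positivity, ?_⟩
      rw [div_le_one (by positivity)]
      nlinarith
  · rw [hL 0 (by omega)]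
    simp
  · rw [hR (2 * N₀) (by omega)]
    simp
  · rw [hL N₀ le_rfl]
    field_simp
end

section
/- Quantitative discrete lower bound (core of the Laplace-equation lemma): let N₀ ≥ 1 be an integer, ε > 0, H > 0 with 2ε²/H² ≤ 1, h = ε/N₀, and K ≥ 0. Suppose e_0,…,e_{2N₀} are reals with e_0 = e_{2N₀} = 0 such that for every i with 1 ≤ i ≤ 2N₀ − 1, (ε²/h²)(−e_{i−1} + 2e_i − e_{i+1}) + (2ε²/H²) e_i = (1/(3e))·𝟙_{i=N₀} + R_i, where 𝟙_{i=N₀} equals 1 if i = N₀ and 0 otherwise, e is Euler's number, and |R_i| ≤ K h²/ε² = K N₀^{−2}. Then e_{N₀} ≥ 1/(12 e N₀) − K/(2 N₀²). -/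
/-!
The operator `L d i = A (-d (i-1) + 2 d i - d (i+1)) + c d i`, with `A = N₀²` and
`c = 2ε²/H² ∈ (0, 1]`, satisfies a discrete minimum principle (`nonneg_of_discrete_op_nonneg`),
so it is enough to exhibit a subsolution `w` vanishing at both ends with
`L w ≤ (1/(3e)) 𝟙_{i=N₀} - K/N₀²` and `w N₀ = 1/(12 e N₀) - K/(2 N₀²)`. It is
`w = (1/(3e)) (1/(4N₀)) φ - (K/N₀²) q`, where

* `q i = i (2N₀ - i) / (2N₀²)` has `N₀² (-δ² q) = 1` and `q ≥ 0`, hence `L q ≥ 1`, and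
  `q N₀ = 1/2`;
* `φ i = s (s + N₀) / (2N₀²)`, with `s = min i (2N₀ - i)`, is a convex perturbation of the hat
  function with `φ N₀ = 1`. Off the midpoint `N₀² δ² φ = 1 ≥ c φ`, so the reaction term is
  absorbed, and at the midpoint `L φ = 3N₀ - 1 + c ≤ 4N₀`.
-/

/-- Discrete minimum principle for a tridiagonal operator with positive zeroth-order term. -/
lemma nonneg_of_discrete_op_nonneg (M : ℕ) (A c : ℝ) (hA : 0 ≤ A) (hc : 0 < c) (d : ℕ → ℝ)
    (h0 : 0 ≤ d 0) (hM : 0 ≤ d M)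
    (hd : ∀ i, 1 ≤ i → i ≤ M - 1 →
      0 ≤ A * (-(d (i - 1)) + 2 * d i - d (i + 1)) + c * d i) :
    ∀ i, i ≤ M → 0 ≤ d i := by
  obtain ⟨m, hm, hmin⟩ := Finset.exists_min_image (Finset.range (M + 1)) d ⟨0, by simp⟩
  simp only [Finset.mem_range] at hm hmin
  suffices hpos : 0 ≤ d m from fun i hi => hpos.trans (hmin i (by omega))
  by_contra! hneg
  have hm0 : m ≠ 0 := by rintro rfl; linarith
  have hmM : m ≠ M := by rintro rfl; linarith
  have h1 := hmin (m - 1) (by omega)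
  have h2 := hmin (m + 1) (by omega)
  have h3 := hd m (by omega) (by omega)
  have h4 : A * (-(d (m - 1)) + 2 * d m - d (m + 1)) ≤ 0 :=
    mul_nonpos_of_nonneg_of_nonpos hA (by linarith)
  have h5 : c * d m < 0 := mul_neg_of_pos_of_neg hc hneg
  linarith

/-- The quadratic barrier `q i = i (2n - i) / (2n²)`, absorbing the remainder. -/
noncomputable def quadBarrier (n : ℕ) (i : ℕ) : ℝ :=
  (i : ℝ) * (2 * n - i) / (2 * (n : ℝ) ^ 2)

/-- The barrier `φ i = s (s + n) / (2n²)` with `s = min i (2n - i)` the distance to the ends,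
convex on each half and with a downward kink at the midpoint `n`. -/
noncomputable def kinkBarrier (n : ℕ) (i : ℕ) : ℝ :=
  min (i : ℝ) (2 * n - i) * (min (i : ℝ) (2 * n - i) + n) / (2 * (n : ℝ) ^ 2)

lemma one_le_quadBarrier_op (n : ℕ) (hn : 1 ≤ n) (c : ℝ) (hc : 0 ≤ c) (i : ℕ) (hi : 1 ≤ i)
    (hi' : i ≤ 2 * n - 1) :
    1 ≤ (n : ℝ) ^ 2 * (-(quadBarrier n (i - 1)) + 2 * quadBarrier n i - quadBarrier n (i + 1))
      + c * quadBarrier n i := by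
  have hn' : (0 : ℝ) < n := by exact_mod_cast hn
  have hle : (i : ℝ) ≤ 2 * n := by exact_mod_cast (by omega : i ≤ 2 * n)
  have hq : 0 ≤ quadBarrier n i :=
    div_nonneg (mul_nonneg (by positivity) (by linarith)) (by positivity)
  have heq : (n : ℝ) ^ 2 *
      (-(quadBarrier n (i - 1)) + 2 * quadBarrier n i - quadBarrier n (i + 1)) = 1 := by
    unfold quadBarrier
    push_cast [Nat.cast_sub hi]
    field_simp
    ring
  have := mul_nonneg hc hq
  linarith

lemma kinkBarrier_op_le (n : ℕ) (hn : 1 ≤ n) (c : ℝ) (hc : 0 ≤ c) (hc1 : c ≤ 1) (i : ℕ)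
    (hi : 1 ≤ i) (hi' : i ≤ 2 * n - 1) :
    (n : ℝ) ^ 2 * (-(kinkBarrier n (i - 1)) + 2 * kinkBarrier n i - kinkBarrier n (i + 1))
      + c * kinkBarrier n i ≤ 4 * n * (if i = n then (1 : ℝ) else 0) := by
  have hn' : (1 : ℝ) ≤ n := by exact_mod_cast hn
  have hn0 : (0 : ℝ) < n := by linarith
  have hi1 : (1 : ℝ) ≤ i := by exact_mod_cast hi
  have hi2 : (i : ℝ) + 1 ≤ 2 * n := by exact_mod_cast (by omega : i + 1 ≤ 2 * n)
  have hφ : kinkBarrier n i ≤ 1 := by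
    unfold kinkBarrier
    have hs0 : 0 ≤ min (i : ℝ) (2 * n - i) := le_min (by linarith) (by linarith)
    have hsn : min (i : ℝ) (2 * n - i) ≤ n := by
      rcases le_total (i : ℝ) n with h | h
      · exact (min_le_left _ _).trans h
      · exact (min_le_right _ _).trans (by linarith)
    rw [div_le_one (by positivity)]
    nlinarith
  have hcφ : c * kinkBarrier n i ≤ 1 := by nlinarith
  -- The second difference is computed exactly in each of the three regimes.
  rcases lt_trichotomy i n with h | h | h
  · have h' : (i : ℝ) + 1 ≤ n := by exact_mod_cast h
    have heq : (n : ℝ) ^ 2 *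
        (-(kinkBarrier n (i - 1)) + 2 * kinkBarrier n i - kinkBarrier n (i + 1)) = -1 := by
      unfold kinkBarrier
      push_cast [Nat.cast_sub hi]
      rw [min_eq_left (by linarith), min_eq_left (by linarith), min_eq_left (by linarith)]
      field_simp
      ring
    rw [if_neg h.ne]
    linarith
  · subst h
    have heq : (i : ℝ) ^ 2 *
        (-(kinkBarrier i (i - 1)) + 2 * kinkBarrier i i - kinkBarrier i (i + 1))
          = 3 * i - 1 := by
      unfold kinkBarrier
      push_cast [Nat.cast_sub hi]
      rw [min_eq_left (by linarith), min_eq_left (by linarith), min_eq_right (by linarith)]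
      field_simp
      ring
    rw [if_pos rfl]
    linarith
  · have h' : (n : ℝ) + 1 ≤ i := by exact_mod_cast h
    have heq : (n : ℝ) ^ 2 *
        (-(kinkBarrier n (i - 1)) + 2 * kinkBarrier n i - kinkBarrier n (i + 1)) = -1 := by
      unfold kinkBarrier
      push_cast [Nat.cast_sub hi]
      rw [min_eq_right (by linarith), min_eq_right (by linarith), min_eq_right (by linarith)]
      field_simp
      ring
    rw [if_neg h.ne']
    linarith

/-- Quantitative discrete lower bound (core of the Laplace-equation lemma):
if `e 0 = e (2N₀) = 0` and the errors satisfy the tridiagonal system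
`(ε²/h²)(-(e (i-1)) + 2 e i - e (i+1)) + (2ε²/H²) e i = (1/(3e)) 𝟙_{i=N₀} + R i`
with `2ε²/H² ≤ 1`, `h = ε/N₀` and `|R i| ≤ K h²/ε² = K N₀⁻²`, then
`e N₀ ≥ 1/(12 e N₀) - K/(2 N₀²)`. -/
theorem discrete_lower_bound_laplace
    (N₀ : ℕ) (hN₀ : 1 ≤ N₀) (ε H : ℝ) (hε : 0 < ε) (hH : 0 < H)
    (hani : 2 * ε ^ 2 / H ^ 2 ≤ 1)
    (h : ℝ) (hh : h = ε / N₀) (K : ℝ) (hK : 0 ≤ K)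
    (e R : ℕ → ℝ) (he0 : e 0 = 0) (heM : e (2 * N₀) = 0)
    (heq : ∀ i, 1 ≤ i → i ≤ 2 * N₀ - 1 →
      ε ^ 2 / h ^ 2 * (-(e (i - 1)) + 2 * e i - e (i + 1))
          + 2 * ε ^ 2 / H ^ 2 * e i
        = 1 / (3 * Real.exp 1) * (if i = N₀ then (1 : ℝ) else 0) + R i)
    (hR : ∀ i, 1 ≤ i → i ≤ 2 * N₀ - 1 → |R i| ≤ K * h ^ 2 / ε ^ 2) :
    e N₀ ≥ 1 / (12 * Real.exp 1 * N₀) - K / (2 * (N₀ : ℝ) ^ 2) := by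
  have hn0 : (0 : ℝ) < N₀ := by exact_mod_cast hN₀
  have hA : ε ^ 2 / h ^ 2 = (N₀ : ℝ) ^ 2 := by
    rw [hh]; field_simp
  have hKh : K * h ^ 2 / ε ^ 2 = K / (N₀ : ℝ) ^ 2 := by
    rw [hh]; field_simp
  have hc : 0 < 2 * ε ^ 2 / H ^ 2 := by positivity
  rw [hA] at heq
  rw [hKh] at hR
  generalize 2 * ε ^ 2 / H ^ 2 = c at *
  have hE : 0 < Real.exp 1 := Real.exp_pos 1
  -- `a` and `b` are the coefficients of the two barriers in the subsolution `w = a φ - b q`.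
  set a : ℝ := 1 / (3 * Real.exp 1) / (4 * N₀) with ha
  set b : ℝ := K / (N₀ : ℝ) ^ 2 with hb
  have ha0 : 0 ≤ a := by positivity
  have hb0 : 0 ≤ b := by positivity
  have ha4 : 1 / (3 * Real.exp 1) = a * (4 * N₀) := by rw [ha]; field_simp
  have hq0 : quadBarrier N₀ 0 = 0 := by simp [quadBarrier]
  have hqM : quadBarrier N₀ (2 * N₀) = 0 := by simp [quadBarrier]
  have hφ0 : kinkBarrier N₀ 0 = 0 := by simp [kinkBarrier]
  have hφM : kinkBarrier N₀ (2 * N₀) = 0 := by simp [kinkBarrier]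
  have hqN : quadBarrier N₀ N₀ = 1 / 2 := by
    unfold quadBarrier; field_simp; ring
  have hφN : kinkBarrier N₀ N₀ = 1 := by
    unfold kinkBarrier
    rw [min_eq_left (by linarith)]; field_simp; ring
  have key := nonneg_of_discrete_op_nonneg (2 * N₀) ((N₀ : ℝ) ^ 2) c (by positivity) hc
    (fun i => e i - (a * kinkBarrier N₀ i - b * quadBarrier N₀ i))
    (by simp [he0, hq0, hφ0]) (by simp [heM, hqM, hφM])
    (by
      intro i hi hi'
      have h1 := mul_le_mul_of_nonneg_left
        (one_le_quadBarrier_op N₀ hN₀ c hc.le i hi hi') hb0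
      have h2 := mul_le_mul_of_nonneg_left
        (kinkBarrier_op_le N₀ hN₀ c hc.le hani i hi hi') ha0
      have h3 := heq i hi hi'
      have h4 := (abs_le.mp (hR i hi hi')).1
      rw [ha4] at h3
      linarith)
    N₀ (by omega)
  simp only [hqN, hφN] at key
  have hfin : 1 / (12 * Real.exp 1 * N₀) - K / (2 * (N₀ : ℝ) ^ 2) = a * 1 - b * (1 / 2) := by
    rw [ha, hb]; field_simp; ring
  rw [hfin]
  linarith
end

section
/- Interpolation error on the Shishkin mesh: there is an absolute constant C > 0 such that for every even integer N ≥ 4 and every ε ∈ (0, 1], the following holds. Set σ = min{2ε ln N, 1/2}, and define the grid x_i = 2σ i/N for 0 ≤ i ≤ N/2 and x_i = σ + (1 − σ)(2i − N)/N for N/2 ≤ i ≤ N. Then for u(x) = e^{−x/ε}, for every 0 ≤ i ≤ N−1 and every x ∈ [x_i, x_{i+1}], |u(x) − u^I(x)| ≤ C N^{−2} (ln N)², where u^I is the piecewise linear interpolant of u on the grid {x_i}. -/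
/-!
On a mesh interval `[a, b]` the function `u s = e^{-s/ε}` is convex and decreasing, so its linear
interpolant lies above it and below `u a`. The error is therefore at most `u a`; expanding `u` to
second order at `a` bounds it also by `u a * ((b - a) / ε)² / 2` (`exp_interp_error`).

On the fine part of the mesh, and everywhere if `σ = 1/2`, the step is `h ≤ 2σ/N ≤ 4 ε ln N / N`,
and the second bound gives `8 N⁻² (ln N)²`. On the coarse part with `σ = 2 ε ln N`, the first bound
gives `u a ≤ e^{-σ/ε} = N⁻²`, which suffices because `ln N ≥ 1`.
-/

lemma exp_neg_le_quadratic {z : ℝ} (hz : 0 ≤ z) : Real.exp (-z) ≤ 1 - z + z ^ 2 / 2 := by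
  have h1 := Real.quadratic_le_exp_of_nonneg hz
  rw [Real.exp_neg, inv_le_iff_one_le_mul₀ (Real.exp_pos z)]
  have hq : 0 ≤ 1 - z + z ^ 2 / 2 := by nlinarith [sq_nonneg (z - 1)]
  -- `(1 - z + z²/2) (1 + z + z²/2) = 1 + z⁴/4`
  nlinarith [mul_le_mul_of_nonneg_left h1 hq, sq_nonneg (z ^ 2)]

/-- Both bounds for the linear interpolation error of `e^{-s/ε}` on a single interval: the first
is effective when the layer has decayed at `a`, the second when the interval is short
compared with `ε`. -/
lemma exp_interp_error {ε a b y : ℝ} (hε : 0 < ε) (hab : a < b) (hy : y ∈ Set.Icc a b) :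
    |Real.exp (-y / ε) - (Real.exp (-a / ε)
        + (Real.exp (-b / ε) - Real.exp (-a / ε)) * (y - a) / (b - a))| ≤ Real.exp (-a / ε) ∧
    |Real.exp (-y / ε) - (Real.exp (-a / ε)
        + (Real.exp (-b / ε) - Real.exp (-a / ε)) * (y - a) / (b - a))|
      ≤ Real.exp (-a / ε) * (((b - a) / ε) ^ 2 / 2) := by
  obtain ⟨hy1, hy2⟩ := hy
  have hh : 0 < b - a := sub_pos.2 hab
  obtain ⟨t, ht⟩ : ∃ t, t = (y - a) / (b - a) := ⟨_, rfl⟩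
  have ht0 : 0 ≤ t := ht ▸ div_nonneg (by linarith) hh.le
  have ht1 : t ≤ 1 := by rw [ht, div_le_one hh]; linarith
  obtain ⟨z, hz⟩ : ∃ z, z = (b - a) / ε := ⟨_, rfl⟩
  have hz0 : 0 ≤ z := hz ▸ (div_pos hh hε).le
  have hyz : -y / ε = -a / ε + -(t * z) := by
    rw [ht, hz]; field_simp; ring
  have hbz : -b / ε = -a / ε + -z := by
    rw [hz]; field_simp; ring
  rw [mul_div_assoc, ← ht, ← hz, hyz, hbz, Real.exp_add, Real.exp_add]
  have hA := Real.exp_pos (-a / ε)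
  generalize Real.exp (-a / ε) = A at hA ⊢
  have hconv : Real.exp (-(t * z)) ≤ (1 - t) + t * Real.exp (-z) := by
    have := convexOn_exp.2 (Set.mem_univ 0) (Set.mem_univ (-z)) (sub_nonneg.2 ht1) ht0 (by ring)
    simpa using this
  have hlow : 1 - t * z ≤ Real.exp (-(t * z)) := by
    linarith [Real.add_one_le_exp (-(t * z))]
  have hpos := Real.exp_pos (-(t * z))
  have hB1 : Real.exp (-z) ≤ 1 := Real.exp_le_one_iff.2 (by linarith)
  have hB2 := exp_neg_le_quadratic hz0
  generalize Real.exp (-(t * z)) = Y at *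
  generalize Real.exp (-z) = B at *
  have hfac : A * Y - (A + (A * B - A) * t) = -(A * ((1 - t) + t * B - Y)) := by ring
  rw [hfac, abs_neg, abs_of_nonneg (mul_nonneg hA.le (by linarith))]
  constructor
  · nlinarith [mul_nonneg ht0 (sub_nonneg.2 hB1)]
  · refine mul_le_mul_of_nonneg_left ?_ hA.le
    nlinarith [mul_le_mul_of_nonneg_left hB2 ht0,
      mul_nonneg (sub_nonneg.2 ht1) (sq_nonneg z)]

/-- Interpolation error on the Shishkin mesh: there is an absolute constant
`C > 0` such that for every even `N ≥ 4` and every `ε ∈ (0,1]`, with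
`σ = min (2ε ln N) (1/2)`, the piecewise-uniform Shishkin grid
`x i = 2σ i / N` for `i ≤ N/2`, `x i = σ + (1-σ)(2i-N)/N` for `N/2 ≤ i ≤ N`,
and `u x = e^{-x/ε}`, the piecewise linear interpolation error on every mesh
interval is at most `C N⁻² (ln N)²`. -/
theorem shishkin_interpolation_error :
    ∃ C : ℝ, 0 < C ∧
      ∀ N : ℕ, 4 ≤ N → Even N → ∀ ε : ℝ, 0 < ε → ε ≤ 1 →
      ∀ σ : ℝ, σ = min (2 * ε * Real.log N) (1 / 2) →
      ∀ x : ℕ → ℝ,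
        (∀ i ≤ N / 2, x i = 2 * σ * i / N) →
        (∀ i, N / 2 ≤ i → i ≤ N →
          x i = σ + (1 - σ) * (2 * (i : ℝ) - N) / N) →
      ∀ u : ℝ → ℝ, u = (fun s => Real.exp (-s / ε)) →
      ∀ i ≤ N - 1, ∀ y ∈ Set.Icc (x i) (x (i + 1)),
        |u y - (u (x i)
            + (u (x (i + 1)) - u (x i)) * (y - x i) / (x (i + 1) - x i))|
          ≤ C * ((N : ℝ) ^ 2)⁻¹ * Real.log N ^ 2 := by
  refine ⟨8, by norm_num, ?_⟩
  intro N hN hE ε hε hε1 σ hσ x hx1 hx2 u hu i hi y hy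
  subst hu
  have hN0 : (0 : ℝ) < N := by exact_mod_cast (by omega : 0 < N)
  have hL : 1 ≤ Real.log N := by
    rw [Real.le_log_iff_exp_le hN0]
    have h4 : (4 : ℝ) ≤ N := by exact_mod_cast hN
    linarith [Real.exp_one_lt_d9]
  have hσ1 : σ ≤ 2 * ε * Real.log N := hσ ▸ min_le_left _ _
  have hσ2 : σ ≤ 1 / 2 := hσ ▸ min_le_right _ _
  have hσ0 : 0 < σ := by
    rw [hσ]; exact lt_min (by positivity) (by norm_num)
  have hhalf : ((N / 2 : ℕ) : ℝ) = N / 2 := by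
    rw [Nat.cast_div hE.two_dvd (by norm_num)]; norm_num
  have hC : (8 : ℝ) * ((N : ℝ) ^ 2)⁻¹ * Real.log N ^ 2 = (4 * Real.log N / N) ^ 2 / 2 := by
    field_simp; norm_num
  -- a step of length `2σ/N` suffices, whichever part of the mesh it belongs to
  have short : 0 ≤ x i → x (i + 1) - x i = 2 * σ / N →
      |Real.exp (-y / ε) - (Real.exp (-x i / ε) + (Real.exp (-x (i + 1) / ε)
        - Real.exp (-x i / ε)) * (y - x i) / (x (i + 1) - x i))|
        ≤ 8 * ((N : ℝ) ^ 2)⁻¹ * Real.log N ^ 2 := by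
    intro h0 hstep
    have hpos : 0 < 2 * σ / N := by positivity
    refine (exp_interp_error hε (by linarith) hy).2.trans ?_
    have hA : Real.exp (-x i / ε) ≤ 1 :=
      Real.exp_le_one_iff.2 (div_nonpos_of_nonpos_of_nonneg (by linarith) hε.le)
    have hz : (x (i + 1) - x i) / ε ≤ 4 * Real.log N / N := by
      rw [hstep, div_div, div_le_div_iff₀ (by positivity) hN0]
      nlinarith
    have hz0 : 0 ≤ (x (i + 1) - x i) / ε := by rw [hstep]; positivity
    rw [hC]
    refine (mul_le_of_le_one_left (by positivity) hA).trans ?_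
    gcongr
  rcases Nat.lt_or_ge i (N / 2) with hlt | hge
  · have e1 := hx1 i hlt.le
    have e2 := hx1 (i + 1) hlt
    push_cast at e2
    refine short ?_ ?_
    · rw [e1]; positivity
    · rw [e1, e2]; ring
  · have e1 := hx2 i hge (by omega)
    have e2 := hx2 (i + 1) (by omega) (by omega)
    push_cast at e2
    have hi2 : (N : ℝ) / 2 ≤ i := by rw [← hhalf]; exact_mod_cast hge
    have hxσ : σ ≤ x i := by
      rw [e1]
      have : 0 ≤ (1 - σ) * (2 * (i : ℝ) - N) / N :=
        div_nonneg (mul_nonneg (by linarith) (by linarith)) hN0.le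
      linarith
    have hstep : x (i + 1) - x i = 2 * (1 - σ) / N := by rw [e1, e2]; ring
    rcases min_choice (2 * ε * Real.log N) (1 / 2) with h | h
    · have hσe : σ = 2 * ε * Real.log N := hσ.trans h
      have hpos : 0 < 2 * (1 - σ) / N := div_pos (by linarith) hN0
      refine (exp_interp_error hε (by linarith) hy).1.trans ?_
      have hA : Real.exp (-x i / ε) ≤ ((N : ℝ) ^ 2)⁻¹ := by
        have hexp : ((N : ℝ) ^ 2)⁻¹ = Real.exp (-(2 * Real.log N)) := by
          rw [Real.exp_neg, two_mul, Real.exp_add, Real.exp_log hN0, sq]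
        rw [hexp, Real.exp_le_exp, div_le_iff₀ hε]
        nlinarith
      have hinv : 0 < ((N : ℝ) ^ 2)⁻¹ := by positivity
      nlinarith [mul_le_mul_of_nonneg_left (one_le_pow₀ hL : 1 ≤ Real.log N ^ 2) hinv.le]
    · have hσe : σ = 1 / 2 := hσ.trans h
      refine short (by linarith) ?_
      rw [hstep, hσe]; norm_num
end

section
/- Interpolation error on the Bakhvalov mesh: there is an absolute constant C > 0 such that for every ε ∈ (0, 1) and every integer N ≥ 4 divisible by 4 the following holds. Set σ = 2ε(|ln ε| + 1). If σ ≥ 3/4, let x_i = i/N for 0 ≤ i ≤ N. Otherwise, define x(t) = 2εt for t ∈ [0,1] and x(t) = 2ε(1 − ln(2−t)) for t ∈ [1, 2−ε]; let x_i = x((2−ε)·4i/(3N)) for 0 ≤ i ≤ 3N/4 (so x_{3N/4} = σ), and let {x_i} for 3N/4 ≤ i ≤ N be uniform on [σ, 1]. Then for u(x) = e^{−x/ε}, for every 0 ≤ i ≤ N−1 and every x ∈ [x_i, x_{i+1}], |u(x) − u^I(x)| ≤ C N^{−2}, where u^I is the piecewise linear interpolant of u on the grid {x_i}. -/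
/-!
On a mesh interval `[a, b]` the interpolation error of `e^{-s/ε}` is at most `e^{-a/ε}` times
`((b - a)/ε)^2`, and also at most `e^{-a/ε}` itself (`interp_error`).

In the layer part, `X t` satisfies `e^{-X t/ε} ≤ (2 - t)^2` and
`X t' - X t ≤ 4ε (t' - t)/(2 - t')`. Let `h = O(1/N)` be the step in `t`. If `h ≤ 2 - t'`, then
`2 - t ≤ 2 (2 - t')` and the first bound gives `64 h^2`; otherwise `2 - t ≤ 2h` and the second bound
gives `4 h^2`. To the right of `σ` one has `e^{-a/ε} ≤ ε^2`, which cancels the `ε^{-2}` of the first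
bound. When `σ ≥ 3/4`, `ε` is bounded away from `0` and the first bound suffices.
-/

/-- The interpolation error of `e^{-z}` on `[0, d]`, in scaled form; the two bounds are used on
small and on large mesh intervals respectively. -/
lemma unit_interp_error {d z : ℝ} (hz : 0 ≤ z) (hzd : z ≤ d) (hd : 0 < d) :
    |Real.exp (-z) - (1 + (Real.exp (-d) - 1) * z / d)| ≤ d ^ 2 ∧
      |Real.exp (-z) - (1 + (Real.exp (-d) - 1) * z / d)| ≤ 1 := by
  have lower : ∀ r : ℝ, 1 - r ≤ Real.exp (-r) := fun r => by
    linarith [Real.add_one_le_exp (-r)]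
  -- `e^{-r} ≤ 1/(1+r) ≤ 1 - r + r^2`
  have upper : ∀ r : ℝ, 0 ≤ r → Real.exp (-r) ≤ 1 - r + r ^ 2 := by
    intro r hr
    have h1 := Real.add_one_le_exp r
    have h2 : Real.exp r * Real.exp (-r) = 1 := by
      rw [← Real.exp_add]; simp
    have h3 := Real.exp_pos (-r)
    have h4 : (r + 1) * Real.exp (-r) ≤ 1 := by nlinarith
    have h5 : (r + 1) * (1 - r + r ^ 2) = 1 + r ^ 3 := by ring
    have h6 : 0 ≤ r ^ 3 := by positivity
    by_contra! hc
    nlinarith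
  obtain ⟨q, hq⟩ : ∃ q, q = z / d := ⟨_, rfl⟩
  have hq0 : 0 ≤ q := hq ▸ by positivity
  have hq1 : q ≤ 1 := by rw [hq, div_le_one hd]; exact hzd
  have hzq : z = q * d := by rw [hq]; field_simp
  rw [mul_div_assoc, ← hq]
  have hz1 := lower z
  have hz2 := upper z hz
  have hd1 := lower d
  have hd2 := upper d hd.le
  have hz3 : Real.exp (-z) ≤ 1 := Real.exp_le_one_iff.2 (by linarith)
  have hd3 : Real.exp (-d) ≤ 1 := Real.exp_le_one_iff.2 (by linarith)
  have hz4 := Real.exp_pos (-z)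
  have hd4 := Real.exp_pos (-d)
  have hzz : z ^ 2 ≤ d ^ 2 := by gcongr
  have m1 := mul_nonneg hq0 (sub_nonneg.2 hd1)
  have m2 := mul_nonneg hq0 (sub_nonneg.2 hd2)
  have m3 := mul_nonneg hq0 (sub_nonneg.2 hd3)
  have m4 := mul_nonneg hq0 hd4.le
  have m5 := mul_nonneg (sub_nonneg.2 hq1) (sq_nonneg d)
  constructor <;> rw [abs_le] <;> constructor <;> nlinarith

lemma interp_error {ε a b y : ℝ} (hε : 0 < ε) (hay : a ≤ y) (hyb : y ≤ b) :
    |Real.exp (-y / ε) - (Real.exp (-a / ε)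
        + (Real.exp (-b / ε) - Real.exp (-a / ε)) * (y - a) / (b - a))|
        ≤ Real.exp (-a / ε) * ((b - a) / ε) ^ 2 ∧
    |Real.exp (-y / ε) - (Real.exp (-a / ε)
        + (Real.exp (-b / ε) - Real.exp (-a / ε)) * (y - a) / (b - a))|
        ≤ Real.exp (-a / ε) := by
  rcases (hay.trans hyb).eq_or_lt with hab | hab
  · obtain rfl : y = a := by linarith
    have := Real.exp_pos (-y / ε)
    subst hab
    simp [this.le]
  · have hba : b - a ≠ 0 := by linarith
    have key := unit_interp_error (d := (b - a) / ε) (z := (y - a) / ε)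
      (div_nonneg (by linarith) hε.le) (by gcongr) (div_pos (by linarith) hε)
    have hy : Real.exp (-y / ε) = Real.exp (-a / ε) * Real.exp (-((y - a) / ε)) := by
      rw [← Real.exp_add]; congr 1; ring
    have hb : Real.exp (-b / ε) = Real.exp (-a / ε) * Real.exp (-((b - a) / ε)) := by
      rw [← Real.exp_add]; congr 1; ring
    have e : Real.exp (-y / ε) - (Real.exp (-a / ε)
        + (Real.exp (-b / ε) - Real.exp (-a / ε)) * (y - a) / (b - a))
        = Real.exp (-a / ε) * (Real.exp (-((y - a) / ε)) -
          (1 + (Real.exp (-((b - a) / ε)) - 1) * ((y - a) / ε) / ((b - a) / ε))) := by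
      rw [hy, hb]; field_simp
    have hp := Real.exp_pos (-a / ε)
    rw [e, abs_mul, abs_of_pos hp]
    exact ⟨mul_le_mul_of_nonneg_left key.1 hp.le, by nlinarith [key.2]⟩

/-- The mesh generating function of the layer part. -/
noncomputable def meshGen (ε t : ℝ) : ℝ :=
  if t ≤ 1 then 2 * ε * t else 2 * ε * (1 - Real.log (2 - t))

lemma exp_meshGen_le {ε t : ℝ} (hε : 0 < ε) (h0 : 0 ≤ t) (h2 : t < 2) :
    Real.exp (-meshGen ε t / ε) ≤ (2 - t) ^ 2 := by
  unfold meshGen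
  split_ifs with h
  · have : Real.exp (-(2 * ε * t) / ε) ≤ 1 :=
      Real.exp_le_one_iff.2 (div_nonpos_of_nonpos_of_nonneg (by nlinarith) hε.le)
    nlinarith
  · have e : -(2 * ε * (1 - Real.log (2 - t))) / ε
        = -2 + (Real.log (2 - t) + Real.log (2 - t)) := by field_simp; ring
    have h3 : Real.exp (-2) ≤ 1 := Real.exp_le_one_iff.2 (by norm_num)
    rw [e, Real.exp_add, Real.exp_add, Real.exp_log (by linarith)]
    nlinarith [sq_nonneg (2 - t)]

lemma meshGen_sub_le {ε t s : ℝ} (hε : 0 < ε) (h0 : 0 ≤ t) (hts : t ≤ s) (h2 : s < 2) :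
    meshGen ε s - meshGen ε t ≤ 4 * ε * ((s - t) / (2 - s)) := by
  have hs : 0 < 2 - s := by linarith
  unfold meshGen
  split_ifs with h1 h3 h3
  · have : (s - t) / 2 ≤ (s - t) / (2 - s) :=
      div_le_div_of_nonneg_left (by linarith) hs (by linarith)
    nlinarith
  · linarith
  · have h4 := Real.one_sub_inv_le_log_of_pos hs
    have h5 : (s - t) / (2 - s) = (2 - s)⁻¹ * (2 - t) - 1 := by field_simp; ring
    have h6 : 1 ≤ (2 - s)⁻¹ := (one_le_inv₀ hs).2 (by linarith)
    have h7 : (1 - t) - Real.log (2 - s) ≤ (s - t) / (2 - s) := by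
      rw [h5]; nlinarith
    have h8 : 0 ≤ (s - t) / (2 - s) := by apply div_nonneg <;> linarith
    nlinarith
  · have ht : 0 < 2 - t := by linarith
    have h4 := Real.log_le_sub_one_of_pos (div_pos ht hs)
    rw [Real.log_div ht.ne' hs.ne'] at h4
    have h5 : (s - t) / (2 - s) = (2 - t) / (2 - s) - 1 := by field_simp; ring
    have h8 : 0 ≤ (s - t) / (2 - s) := by apply div_nonneg <;> linarith
    nlinarith

lemma layer_error {ε t s y : ℝ} (hε : 0 < ε) (h0 : 0 ≤ t) (hts : t ≤ s) (h2 : s < 2)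
    (hay : meshGen ε t ≤ y) (hyb : y ≤ meshGen ε s) :
    |Real.exp (-y / ε) - (Real.exp (-meshGen ε t / ε)
        + (Real.exp (-meshGen ε s / ε) - Real.exp (-meshGen ε t / ε)) * (y - meshGen ε t)
          / (meshGen ε s - meshGen ε t))| ≤ 64 * (s - t) ^ 2 := by
  obtain ⟨k1, k2⟩ := interp_error hε hay hyb
  have hu := exp_meshGen_le hε h0 (by linarith : t < 2)
  have hs : 0 < 2 - s := by linarith
  rcases le_total (s - t) (2 - s) with h | h
  · refine k1.trans ?_
    have hd : (meshGen ε s - meshGen ε t) / ε ≤ 4 * ((s - t) / (2 - s)) := by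
      rw [div_le_iff₀ hε]; linarith [meshGen_sub_le hε h0 hts h2]
    have hd0 : 0 ≤ (meshGen ε s - meshGen ε t) / ε := div_nonneg (by linarith) hε.le
    calc _ ≤ (2 * (2 - s)) ^ 2 * (4 * ((s - t) / (2 - s))) ^ 2 := by
          refine mul_le_mul (hu.trans ?_) (by gcongr) (by positivity) (by positivity)
          exact pow_le_pow_left₀ (by linarith) (by linarith) 2
      _ = _ := by field_simp; ring
  · refine k2.trans (hu.trans ?_)
    nlinarith

/-- The case of a uniform mesh only occurs for `ε` bounded away from zero:
`1 - log ε ≤ 2/√ε - 1`, hence `σ ≤ 4√ε`. -/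
lemma eps_lower {ε : ℝ} (hε : 0 < ε) (h1 : ε < 1)
    (h : 3 / 4 ≤ 2 * ε * (|Real.log ε| + 1)) : 9 / 256 ≤ ε := by
  rw [abs_of_neg (Real.log_neg hε h1)] at h
  obtain ⟨r, hr, rfl⟩ : ∃ r : ℝ, 0 < r ∧ ε = r ^ 2 :=
    ⟨√ε, Real.sqrt_pos.2 hε, (Real.sq_sqrt hε.le).symm⟩
  have hl := Real.one_sub_inv_le_log_of_pos hr
  rw [Real.log_pow] at h
  push_cast at h
  have e : r ^ 2 * r⁻¹ = r := by field_simp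
  have hm := mul_le_mul_of_nonneg_left hl hε.le
  nlinarith

/-- Interpolation error on the Bakhvalov mesh: there is an absolute constant
`C > 0` such that for all `ε ∈ (0,1)` and all `N ≥ 4` divisible by `4`, with
`σ = 2ε(|ln ε| + 1)`, the grid which is uniform on `[0,1]` if `σ ≥ 3/4` and
otherwise is generated on `[0, σ]` by `x i = X((2-ε) · 4i/(3N))` with
`X t = 2εt` on `[0,1]`, `X t = 2ε(1 - ln(2-t))` on `[1, 2-ε]`, and is uniform
on `[σ, 1]` for `3N/4 ≤ i ≤ N`, the piecewise linear interpolation error of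
`u x = e^{-x/ε}` on every mesh interval is at most `C N⁻²`. -/
theorem bakhvalov_interpolation_error :
    ∃ C : ℝ, 0 < C ∧
      ∀ ε : ℝ, 0 < ε → ε < 1 → ∀ N : ℕ, 4 ≤ N → 4 ∣ N →
      ∀ σ : ℝ, σ = 2 * ε * (|Real.log ε| + 1) →
      ∀ X : ℝ → ℝ,
        (∀ t, X t = if t ≤ 1 then 2 * ε * t
            else 2 * ε * (1 - Real.log (2 - t))) →
      ∀ x : ℕ → ℝ,
        (3 / 4 ≤ σ → ∀ i ≤ N, x i = (i : ℝ) / N) →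
        (σ < 3 / 4 →
          (∀ i ≤ 3 * N / 4, x i = X ((2 - ε) * (4 * i) / (3 * N)))
          ∧ (∀ i, 3 * N / 4 ≤ i → i ≤ N →
              x i = σ + (1 - σ) * (4 * (i : ℝ) - 3 * N) / N)) →
      ∀ u : ℝ → ℝ, u = (fun s => Real.exp (-s / ε)) →
      ∀ i ≤ N - 1, ∀ y ∈ Set.Icc (x i) (x (i + 1)),
        |u y - (u (x i)
            + (u (x (i + 1)) - u (x i)) * (y - x i) / (x (i + 1) - x i))|
          ≤ C * ((N : ℝ) ^ 2)⁻¹ := by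
  refine ⟨1000, by norm_num, ?_⟩
  rintro ε hε hε1 N hN ⟨k, rfl⟩ σ hσ X hX x hunif hlayer u rfl i hi y ⟨hy1, hy2⟩
  have hXm : ∀ t, X t = meshGen ε t := hX
  have hk : (0 : ℝ) < k := by exact_mod_cast (by omega : 0 < k)
  have hNr : ((4 * k : ℕ) : ℝ) = 4 * k := by push_cast; rfl
  rw [hNr]
  rcases le_or_gt (3 / 4) σ with hσ1 | hσ1
  · have hx := hunif hσ1
    have hεl := eps_lower hε hε1 (hσ ▸ hσ1)
    have hw : x (i + 1) - x i = 1 / (4 * k) := by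
      rw [hx _ (by omega), hx _ (by omega), hNr]; push_cast; ring
    have hx0 : 0 ≤ x i := by rw [hx _ (by omega)]; positivity
    refine (interp_error hε hy1 hy2).1.trans ?_
    have he : Real.exp (-x i / ε) ≤ 1 :=
      Real.exp_le_one_iff.2 (div_nonpos_of_nonpos_of_nonneg (by linarith) hε.le)
    rw [hw]
    calc _ ≤ 1 * (1 / (4 * (k : ℝ)) / (9 / 256)) ^ 2 := by gcongr
      _ = (256 / 9) ^ 2 * ((4 * (k : ℝ)) ^ 2)⁻¹ := by field_simp
      _ ≤ _ := by gcongr; norm_num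
  · obtain ⟨hl, hr⟩ := hlayer hσ1
    have h3 : 3 * (4 * k) / 4 = 3 * k := by omega
    rw [h3, hNr] at hl hr
    rcases lt_or_ge i (3 * k) with hik | hik
    · have e1 := hl i (by omega)
      have e2 := hl (i + 1) (by omega)
      rw [hXm] at e1 e2
      have hik' : (i : ℝ) + 1 ≤ 3 * k := by exact_mod_cast hik
      have hst : (2 - ε) * (4 * ((i + 1 : ℕ) : ℝ)) / (3 * (4 * k))
          - (2 - ε) * (4 * (i : ℝ)) / (3 * (4 * k)) = (2 - ε) / (3 * k) := by
        push_cast; field_simp; ring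
      have hpos : 0 ≤ (2 - ε) / (3 * k) := div_nonneg (by linarith) (by positivity)
      have hs2 : (2 - ε) * (4 * ((i + 1 : ℕ) : ℝ)) / (3 * (4 * k)) < 2 := by
        rw [div_lt_iff₀ (by positivity)]; push_cast; nlinarith
      have ht0 : 0 ≤ (2 - ε) * (4 * (i : ℝ)) / (3 * (4 * k)) :=
        div_nonneg (mul_nonneg (by linarith) (by positivity)) (by positivity)
      have key := layer_error hε ht0 (by linarith) hs2 (e1 ▸ hy1) (e2 ▸ hy2)
      rw [← e1, ← e2, hst] at key
      refine key.trans ?_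
      calc _ ≤ 64 * (2 / (3 * (k : ℝ))) ^ 2 := by gcongr; linarith
        _ = 4096 / 9 * ((4 * (k : ℝ)) ^ 2)⁻¹ := by field_simp; norm_num
        _ ≤ _ := by gcongr; norm_num
    · have e1 := hr i hik (by omega)
      have e2 := hr (i + 1) (by omega) (by omega)
      have hik' : 3 * (k : ℝ) ≤ i := by exact_mod_cast hik
      have hlog := Real.log_neg hε hε1
      have hσ0 : 0 < σ := by rw [hσ]; positivity
      have hw : x (i + 1) - x i = (1 - σ) / k := by
        rw [e1, e2]; push_cast; field_simp; ring
      have hxσ : σ ≤ x i := by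
        rw [e1]
        have : 0 ≤ (1 - σ) * (4 * (i : ℝ) - 3 * (4 * k)) / (4 * k) :=
          div_nonneg (mul_nonneg (by linarith) (by linarith)) (by positivity)
        linarith
      -- `e^{-σ/ε} = e^{-2} ε^2`
      have he : Real.exp (-x i / ε) ≤ ε ^ 2 := by
        have : -x i / ε ≤ Real.log ε + Real.log ε := by
          rw [div_le_iff₀ hε]
          rw [abs_of_neg hlog] at hσ
          nlinarith
        refine (Real.exp_le_exp.2 this).trans (le_of_eq ?_)
        rw [Real.exp_add, Real.exp_log hε, sq]
      refine (interp_error hε hy1 hy2).1.trans ?_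
      rw [hw]
      have hw0 : 0 ≤ 1 - σ := by linarith
      calc _ ≤ ε ^ 2 * (1 / (k : ℝ) / ε) ^ 2 := by gcongr; linarith
        _ = 16 * ((4 * (k : ℝ)) ^ 2)⁻¹ := by field_simp; norm_num
        _ ≤ _ := by gcongr; norm_num
end

section
/- First-order lower bound for the perturbed reaction-diffusion difference scheme (discrete form of the lemma on type-C triangulations): for all reals c̄ ≥ 2/3 and K > 0 there exist a constant C₀ > 0 and an integer N₁ ≥ 1 such that for every integer N₀ ≥ N₁ the following holds. Suppose c_1,…,c_{2N₀−1} are reals with 2/3 ≤ c_i ≤ c̄, R_1,…,R_{2N₀−1} are reals with |R_i| ≤ K N₀^{−2}, and e_0,…,e_{2N₀} are reals with e_0 = e_{2N₀} = 0 satisfying, for all 1 ≤ i ≤ 2N₀−1, N₀²(−e_{i−1} + 2e_i − e_{i+1}) + c_i e_i = (1/(3e))·𝟙_{i=N₀} + R_i, where 𝟙_{i=N₀} equals 1 if i = N₀ and 0 otherwise and e is Euler's number. Then e_{N₀} ≥ C₀ N₀^{−1}. -/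
/-!
The proof is a barrier argument. The operator
`(L v) i = N² (-v (i-1) + 2 v i - v (i+1)) + c i * v i` with `c i > 0` satisfies a discrete maximum
principle (`discrete_max_principle`), so it suffices to exhibit `w ≤ e` at the two end points with
`L w ≤ L e` inside and `w N` of order `1/N`.

The barrier is `w i = A/N * (q^|i-N| - q^N) - 2K/N²` with `q = 1/(1 + a/N)`, `a = cbar + 1`,
`A = 1/(9 a exp 1)`.
* Away from the spike, `q⁻¹ + q - 2 = (a/N)²/(1 + a/N) ≥ cbar/N²`, so `L (q^|i-N|) ≤ 0`; subtracting
  the nonnegative constant `q^N`, which makes the bracket vanish at both ends, only decreases `L w`.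
* The constant `-2K/N²` absorbs the remainder because `c i ≥ 2/3`.
* At the spike, `L (q^|i-N|) ≤ 2 a N + cbar ≤ 3 a N`, so `A` keeps `L w` below `1/(3 exp 1)`.
* By Bernoulli's inequality `q^N ≤ 1/(1 + a)`, so `w N ≥ (A a/(1 + a))/N - 2K/N²`, where the second
  term is at most half of the first for large `N`.
-/

/-- Discrete maximum principle for `v ↦ M (-v (i-1) + 2 v i - v (i+1)) + c i * v i`: at an interior
positive maximum both terms would be nonnegative and the second one positive. -/
lemma discrete_max_principle (n : ℕ) (M : ℝ) (hM : 0 ≤ M) (c d : ℕ → ℝ)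
    (hc : ∀ i, 1 ≤ i → i ≤ n - 1 → 0 < c i)
    (h0 : d 0 ≤ 0) (hn : d n ≤ 0)
    (hd : ∀ i, 1 ≤ i → i ≤ n - 1 →
      M * (-(d (i - 1)) + 2 * d i - d (i + 1)) + c i * d i ≤ 0) :
    ∀ i, i ≤ n → d i ≤ 0 := by
  obtain ⟨j, hj, hmax⟩ := Finset.exists_max_image (Finset.range (n + 1)) d ⟨0, by simp⟩
  have hjn : j ≤ n := by simpa [Nat.lt_succ_iff] using hj
  have hmax' : ∀ i, i ≤ n → d i ≤ d j := fun i hi =>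
    hmax i (Finset.mem_range.2 (by omega))
  suffices h : d j ≤ 0 from fun i hi => (hmax' i hi).trans h
  by_contra! hpos
  have hj0 : j ≠ 0 := by rintro rfl; linarith
  have hjn' : j ≠ n := by rintro rfl; linarith
  have h1 := hmax' (j - 1) (by omega)
  have h2 := hmax' (j + 1) (by omega)
  have h3 := hd j (by omega) (by omega)
  have h4 : 0 ≤ M * (-(d (j - 1)) + 2 * d j - d (j + 1)) := mul_nonneg hM (by linarith)
  have h5 := mul_pos (hc j (by omega) (by omega)) hpos
  linarith

/-- `(N - i) + (i - N)` with truncated subtraction is `|i - N|`. Off the peak the profile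
`q^|i-N|` is a discrete subsolution: its neighbours carry the factors `q⁻¹` and `q`, and
`q⁻¹ + q - 2 = (1 - q)²/q`. -/
lemma peak_off (N i : ℕ) (q M b : ℝ) (hq : 0 ≤ q) (hb : b * q ≤ M * (1 - q) ^ 2)
    (hi : 1 ≤ i) (hiN : i ≠ N) :
    M * (-(q ^ ((N - (i - 1)) + (i - 1 - N))) + 2 * q ^ ((N - i) + (i - N))
      - q ^ ((N - (i + 1)) + (i + 1 - N))) + b * q ^ ((N - i) + (i - N)) ≤ 0 := by
  obtain ⟨k, hk⟩ : ∃ k, (N - i) + (i - N) = k + 1 :=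
    ⟨(N - i) + (i - N) - 1, by omega⟩
  have key : M * (-(q ^ k) + 2 * q ^ (k + 1) - q ^ (k + 2)) + b * q ^ (k + 1) ≤ 0 := by
    have := mul_le_mul_of_nonneg_right hb (pow_nonneg hq k)
    have e : M * (-(q ^ k) + 2 * q ^ (k + 1) - q ^ (k + 2)) + b * q ^ (k + 1)
      = b * q * q ^ k - M * (1 - q) ^ 2 * q ^ k := by ring
    linarith
  rcases lt_or_gt_of_ne hiN with h | h
  · rw [hk, show (N - (i - 1)) + (i - 1 - N) = k + 2 by omega,
      show (N - (i + 1)) + (i + 1 - N) = k by omega]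
    linarith
  · rw [hk, show (N - (i - 1)) + (i - 1 - N) = k by omega,
      show (N - (i + 1)) + (i + 1 - N) = k + 2 by omega]
    exact key


/-- First-order lower bound for the perturbed reaction-diffusion difference
scheme (discrete form of the lemma on type-C triangulations): for all
`cbar ≥ 2/3` and `K > 0` there exist `C₀ > 0` and `N₁ ≥ 1` such that whenever
`N₀ ≥ N₁`, `2/3 ≤ c i ≤ cbar`, `|R i| ≤ K N₀⁻²`, `e 0 = e (2N₀) = 0` and
`N₀²(-(e (i-1)) + 2 e i - e (i+1)) + c i * e i = (1/(3e)) 𝟙_{i=N₀} + R i`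
at all interior indices, one has `e N₀ ≥ C₀ N₀⁻¹`. -/
theorem first_order_lower_bound_typeC
    (cbar K : ℝ) (hcbar : 2 / 3 ≤ cbar) (hK : 0 < K) :
    ∃ (C₀ : ℝ) (N₁ : ℕ), 0 < C₀ ∧ 1 ≤ N₁ ∧
      ∀ N₀ : ℕ, N₁ ≤ N₀ →
      ∀ c R e : ℕ → ℝ,
        (∀ i, 1 ≤ i → i ≤ 2 * N₀ - 1 → 2 / 3 ≤ c i ∧ c i ≤ cbar) →
        (∀ i, 1 ≤ i → i ≤ 2 * N₀ - 1 → |R i| ≤ K * ((N₀ : ℝ) ^ 2)⁻¹) →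
        e 0 = 0 → e (2 * N₀) = 0 →
        (∀ i, 1 ≤ i → i ≤ 2 * N₀ - 1 →
          (N₀ : ℝ) ^ 2 * (-(e (i - 1)) + 2 * e i - e (i + 1)) + c i * e i
            = 1 / (3 * Real.exp 1) * (if i = N₀ then (1 : ℝ) else 0) + R i) →
        e N₀ ≥ C₀ * ((N₀ : ℝ))⁻¹ := by
  have hE : 0 < Real.exp 1 := Real.exp_pos 1
  obtain ⟨a, ha⟩ : ∃ a : ℝ, a = cbar + 1 := ⟨_, rfl⟩
  have ha0 : 0 < a := by linarith
  obtain ⟨A, hA⟩ : ∃ A : ℝ, A = 1 / (9 * a * Real.exp 1) := ⟨_, rfl⟩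
  have hA0 : 0 < A := by rw [hA]; positivity
  have hA3 : A * (3 * a) = 1 / (3 * Real.exp 1) := by rw [hA]; field_simp; norm_num
  obtain ⟨C, hC⟩ : ∃ C : ℝ, C = A * (a / (1 + a)) / 2 := ⟨_, rfl⟩
  have hC0 : 0 < C := by rw [hC]; positivity
  refine ⟨C, max 1 ⌈2 * K / C⌉₊, hC0, le_max_left _ _, ?_⟩
  intro N hN c R e hc hR he0 heN hL
  have hN1 : 1 ≤ N := (le_max_left _ _).trans hN
  have hNK : 2 * K / C ≤ (N : ℝ) := Nat.ceil_le.1 ((le_max_right _ _).trans hN)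
  have hx1 : (1 : ℝ) ≤ N := by exact_mod_cast hN1
  obtain ⟨q, hq⟩ : ∃ q : ℝ, q = 1 / (1 + a / (N : ℝ)) := ⟨_, rfl⟩
  have hx0 : (0 : ℝ) < N := by linarith
  have hq0 : 0 < q := by rw [hq]; positivity
  have hqx : q * (N + a) = N := by rw [hq]; field_simp
  have h1q : (N : ℝ) * (1 - q) = a * q := by linarith
  have hq1 : q ≤ 1 := by nlinarith
  -- `(N (1 - q))² = (a q)²`, and `a² q ≥ cbar` follows from `a² ≥ cbar (1 + a)` and `q (1 + a) ≥ 1`.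
  have hb : cbar * q ≤ (N : ℝ) ^ 2 * (1 - q) ^ 2 := by
    have h2 : (N : ℝ) ^ 2 * (1 - q) ^ 2 = (a * q) * (a * q) := by rw [← h1q]; ring
    have h3 : 1 ≤ q * (1 + a) := by nlinarith
    have h4 : cbar ≤ a ^ 2 * q := by
      have h5 : cbar * (1 + a) ≤ a ^ 2 := by rw [ha]; nlinarith
      have h6 := mul_le_mul_of_nonneg_right h5 hq0.le
      nlinarith
    rw [h2]; nlinarith
  have hqN : q ^ N ≤ 1 / (1 + a) := by
    have h2 : 1 + (N : ℝ) * (a / N) ≤ (1 + a / N) ^ N :=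
      one_add_mul_le_pow (by have : 0 < a / (N : ℝ) := by positivity
                             linarith) N
    rw [mul_div_cancel₀ _ hx0.ne'] at h2
    rw [hq, div_pow, one_pow]
    exact one_div_le_one_div_of_le (by linarith) h2
  have hqN0 : 0 ≤ q ^ N := by positivity
  obtain ⟨s, hs⟩ : ∃ s : ℝ, s = A * (N : ℝ)⁻¹ := ⟨_, rfl⟩
  have hs0 : 0 < s := by rw [hs]; positivity
  obtain ⟨k, hk⟩ : ∃ k : ℝ, k = K * ((N : ℝ) ^ 2)⁻¹ := ⟨_, rfl⟩
  have hk0 : 0 < k := by rw [hk]; positivity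
  have hcmp := discrete_max_principle (2 * N) ((N : ℝ) ^ 2) (by positivity) c
    (fun i => s * (q ^ ((N - i) + (i - N)) - q ^ N) - 2 * k - e i)
    (fun i h1 h2 => by linarith [(hc i h1 h2).1])
    (by simp [he0]; linarith)
    (by
      have : (N - 2 * N) + (2 * N - N) = N := by omega
      simp only [this, heN]; linarith)
    (by
      intro i hi1 hi2
      obtain ⟨hcl, hcu⟩ := hc i hi1 hi2
      have hRi := (abs_le.1 (hR i hi1 hi2)).1
      rw [← hk] at hRi
      have hLi := hL i hi1 hi2
      have hck : 2 / 3 * k ≤ c i * k := mul_le_mul_of_nonneg_right hcl hk0.le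
      have hcq : 0 ≤ c i * (s * q ^ N) := mul_nonneg (by linarith) (by positivity)
      by_cases hiN : i = N
      · subst hiN
        simp only [if_true] at hLi
        have e1 : (i - (i - 1)) + (i - 1 - i) = 1 := by omega
        have e2 : (i - i) + (i - i) = 0 := by omega
        have e3 : (i - (i + 1)) + (i + 1 - i) = 1 := by omega
        simp only [e1, e2, e3, pow_zero, pow_one]
        -- `L` of the peak at the spike is `N² (2 - 2q) + c`.
        have hsp : s * ((i : ℝ) ^ 2 * (2 - 2 * q) + c i) ≤ 1 / (3 * Real.exp 1) := by
          have h2 : (i : ℝ) ^ 2 * (2 - 2 * q) + c i ≤ 3 * a * i := by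
            have h3 : (i : ℝ) ^ 2 * (2 - 2 * q) = 2 * i * (a * q) := by rw [← h1q]; ring
            have h4 : i * (a * q) ≤ i * a :=
              mul_le_mul_of_nonneg_left (mul_le_of_le_one_right ha0.le hq1) hx0.le
            have h5 : a ≤ a * i := le_mul_of_one_le_right ha0.le hx1
            linarith
          calc _ ≤ s * (3 * a * i) := mul_le_mul_of_nonneg_left h2 hs0.le
            _ = A * (3 * a) := by rw [hs]; field_simp
            _ = _ := hA3
        linarith
      · have hp := peak_off N i q ((N : ℝ) ^ 2) cbar hq0.le hb hi1 hiN
        simp only [if_neg hiN] at hLi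
        have hpos : 0 ≤ q ^ ((N - i) + (i - N)) := by positivity
        have h2 := mul_le_mul_of_nonneg_right hcu hpos
        generalize q ^ ((N - i) + (i - N)) = y at *
        generalize q ^ ((N - (i - 1)) + (i - 1 - N)) = y1 at *
        generalize q ^ ((N - (i + 1)) + (i + 1 - N)) = y2 at *
        have h3 : s * ((N : ℝ) ^ 2 * (-y1 + 2 * y - y2) + c i * y) ≤ 0 :=
          mul_nonpos_of_nonneg_of_nonpos hs0.le (by linarith)
        linarith)
    N (by omega)
  simp only [Nat.sub_self, add_zero, pow_zero] at hcmp
  have h2 : s * (a / (1 + a)) ≤ s * (1 - q ^ N) := by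
    apply mul_le_mul_of_nonneg_left _ hs0.le
    have : a / (1 + a) = 1 - 1 / (1 + a) := by field_simp; ring
    linarith
  have h3 : s * (a / (1 + a)) = 2 * (C * (N : ℝ)⁻¹) := by rw [hs, hC]; ring
  have h4 : 2 * k ≤ C * (N : ℝ)⁻¹ := by
    rw [div_le_iff₀ hC0] at hNK
    have : 2 * k = 2 * K * (N : ℝ)⁻¹ * (N : ℝ)⁻¹ := by rw [hk]; field_simp
    rw [this]
    apply mul_le_mul_of_nonneg_right _ (by positivity)
    rw [← div_eq_mul_inv, div_le_iff₀ hx0]; linarith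
  linarith
end

section
/- First-order lower bound for the scheme arising from linear elements without quadrature on type-B triangulations (discrete form): for all reals c̄ ≥ 2/3 and K > 0 there exist a constant C₀ > 0 and an integer N₁ ≥ 1 such that for every integer N₀ ≥ N₁ and every constant real c with 2/3 ≤ c ≤ c̄ the following holds. Suppose R_1,…,R_{2N₀−1} are reals with |R_i| ≤ K N₀^{−2}, and e_0,…,e_{2N₀} are reals with e_0 = e_{2N₀} = 0 satisfying, for all 1 ≤ i ≤ 2N₀−1, (N₀² − 1/12)(−e_{i−1} + 2e_i − e_{i+1}) + c·e_i = (1/(6N₀))·e^{−i/N₀} + R_i. Then e_{N₀} ≥ C₀ N₀^{−1}. -/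
/-!
The proof compares the error with a discrete barrier. The parabola
`w i = γ i (2N₀ - i) / N₀³` vanishes at `0` and `2N₀`, equals `γ / N₀` at `N₀`, and satisfies
`-w (i-1) + 2 w i - w (i+1) = 2γ / N₀³`, so the difference operator maps it to at most
`(2 + cbar) γ / N₀`. On `[0, 2]` one has `e^{-x} ≥ e^{-2} ≥ 1/8`, so once `N₀ ≥ 96 K` the
right-hand side of the scheme is at least `1/(48 N₀) - K / N₀² ≥ 1/(96 N₀)`. With
`γ = 1 / (96 (2 + cbar))` the discrete minimum principle (`discrete_min_principle`) applied to
`e - w` gives `e N₀ ≥ w N₀ = γ / N₀`.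
-/

/-- Discrete minimum principle. At an index where `d` attains a negative minimum, the second
difference term is nonpositive and the zero-order term is negative. -/
lemma discrete_min_principle (M : ℕ) (a c : ℝ) (ha : 0 < a) (hc : 0 < c) (d : ℕ → ℝ)
    (h0 : 0 ≤ d 0) (hM : 0 ≤ d M)
    (h : ∀ i, 1 ≤ i → i ≤ M - 1 → 0 ≤ a * (-(d (i - 1)) + 2 * d i - d (i + 1)) + c * d i) :
    ∀ i, i ≤ M → 0 ≤ d i := by
  obtain ⟨m, hm, hmin⟩ := Finset.exists_min_image (Finset.range (M + 1)) d ⟨0, by simp⟩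
  have hmM : m ≤ M := by simpa [Nat.lt_succ_iff] using hm
  have hmin' : ∀ i, i ≤ M → d m ≤ d i := fun i hi => hmin i (by simp; omega)
  suffices hd : 0 ≤ d m from fun i hi => hd.trans (hmin' i hi)
  by_contra! hneg
  have hm0 : m ≠ 0 := by rintro rfl; linarith
  have hmM' : m ≠ M := by rintro rfl; linarith
  have h1 := h m (by omega) (by omega)
  have h2 := hmin' (m - 1) (by omega)
  have h3 := hmin' (m + 1) (by omega)
  have h4 : a * (-(d (m - 1)) + 2 * d m - d (m + 1)) ≤ 0 :=
    mul_nonpos_of_nonneg_of_nonpos ha.le (by linarith)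
  have h5 : c * d m < 0 := mul_neg_of_pos_of_neg hc hneg
  linarith

/-- First-order lower bound for the scheme arising from linear elements
without quadrature on type-B triangulations (discrete form): for all
`cbar ≥ 2/3` and `K > 0` there exist `C₀ > 0` and `N₁ ≥ 1` such that whenever
`N₀ ≥ N₁`, `2/3 ≤ c ≤ cbar`, `|R i| ≤ K N₀⁻²`, `e 0 = e (2N₀) = 0` and
`(N₀² - 1/12)(-(e (i-1)) + 2 e i - e (i+1)) + c e i = (1/(6N₀)) e^{-i/N₀} + R i`
at all interior indices, one has `e N₀ ≥ C₀ N₀⁻¹`. -/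
theorem first_order_lower_bound_typeB
    (cbar K : ℝ) (hcbar : 2 / 3 ≤ cbar) (hK : 0 < K) :
    ∃ (C₀ : ℝ) (N₁ : ℕ), 0 < C₀ ∧ 1 ≤ N₁ ∧
      ∀ N₀ : ℕ, N₁ ≤ N₀ →
      ∀ c : ℝ, 2 / 3 ≤ c → c ≤ cbar →
      ∀ R e : ℕ → ℝ,
        (∀ i, 1 ≤ i → i ≤ 2 * N₀ - 1 → |R i| ≤ K * ((N₀ : ℝ) ^ 2)⁻¹) →
        e 0 = 0 → e (2 * N₀) = 0 →
        (∀ i, 1 ≤ i → i ≤ 2 * N₀ - 1 →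
          ((N₀ : ℝ) ^ 2 - 1 / 12) * (-(e (i - 1)) + 2 * e i - e (i + 1))
              + c * e i
            = 1 / (6 * N₀) * Real.exp (-(i : ℝ) / N₀) + R i) →
        e N₀ ≥ C₀ * ((N₀ : ℝ))⁻¹ := by
  have hcb : 0 < 2 + cbar := by linarith
  obtain ⟨n, hn⟩ := exists_nat_ge (96 * K)
  refine ⟨1 / (96 * (2 + cbar)), n + 1, by positivity, by omega, ?_⟩
  intro N hN c hc hc' R e hR he0 heM heq
  set γ : ℝ := 1 / (96 * (2 + cbar)) with hγ
  have hγ0 : 0 < γ := by positivity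
  have hγ1 : (2 + cbar) * γ = 1 / 96 := by rw [hγ]; field_simp
  have hN1 : (1 : ℝ) ≤ N := by exact_mod_cast (by omega : 1 ≤ N)
  have hNK : 96 * K ≤ N := hn.trans (by exact_mod_cast (by omega : n ≤ N))
  have hN0 : (0 : ℝ) < N := by linarith
  have hexp2 : (1 / 8 : ℝ) ≤ Real.exp (-2) := by
    have h1 := Real.exp_one_lt_d9
    have h2 : Real.exp 2 = Real.exp 1 * Real.exp 1 := by rw [← Real.exp_add]; norm_num
    have h3 : Real.exp 2 ≤ 8 := by
      rw [h2]; nlinarith [Real.exp_pos 1]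
    rw [Real.exp_neg, one_div]
    exact inv_anti₀ (Real.exp_pos 2) h3
  have key := discrete_min_principle (2 * N) ((N : ℝ) ^ 2 - 1 / 12) c (by nlinarith)
    (by linarith) (fun i => e i - γ * i * (2 * N - i) / (N : ℝ) ^ 3)
    (by simp [he0]) (by simp [heM]) ?_ N (by omega)
  · have hw : γ * N * (2 * N - N) / (N : ℝ) ^ 3 = γ * (N : ℝ)⁻¹ := by field_simp; ring
    simp only [hw] at key
    linarith
  · intro i hi1 hi2
    have hiM : (i : ℝ) ≤ 2 * N := by exact_mod_cast (by omega : i ≤ 2 * N)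
    have hcast : ((i - 1 : ℕ) : ℝ) = i - 1 := by push_cast [hi1]; ring
    have hexp : (1 / 8 : ℝ) ≤ Real.exp (-(i : ℝ) / N) := by
      refine hexp2.trans (Real.exp_le_exp.mpr ?_)
      rw [le_div_iff₀ hN0]; linarith
    have hRi := (abs_le.mp (hR i hi1 hi2)).1
    have hKN : K * ((N : ℝ) ^ 2)⁻¹ ≤ 1 / 96 * (N : ℝ)⁻¹ := by
      rw [← div_eq_mul_inv, ← div_eq_mul_inv, div_le_div_iff₀ (by positivity) hN0]
      nlinarith
    have hsrc : 1 / 48 * (N : ℝ)⁻¹ ≤ 1 / (6 * N) * Real.exp (-(i : ℝ) / N) := by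
      calc 1 / 48 * (N : ℝ)⁻¹ = 1 / (6 * N) * (1 / 8) := by field_simp; norm_num
        _ ≤ _ := by gcongr
    have hdiff : ((N : ℝ) ^ 2 - 1 / 12) * (2 * γ / (N : ℝ) ^ 3) ≤ 2 * γ * (N : ℝ)⁻¹ := by
      calc ((N : ℝ) ^ 2 - 1 / 12) * (2 * γ / (N : ℝ) ^ 3)
          ≤ (N : ℝ) ^ 2 * (2 * γ / (N : ℝ) ^ 3) := by gcongr; linarith
        _ = 2 * γ * (N : ℝ)⁻¹ := by field_simp
    -- `i (2N - i) ≤ N²` bounds the parabola by its value at the midpoint.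
    have hw : γ * i * (2 * N - i) / (N : ℝ) ^ 3 ≤ γ * (N : ℝ)⁻¹ := by
      calc γ * i * (2 * N - i) / (N : ℝ) ^ 3 = γ * (i * (2 * N - i)) / (N : ℝ) ^ 3 := by ring
        _ ≤ γ * (N : ℝ) ^ 2 / (N : ℝ) ^ 3 := by
          gcongr; nlinarith [sq_nonneg ((N : ℝ) - i)]
        _ = γ * (N : ℝ)⁻¹ := by field_simp
    have hcw : c * (γ * i * (2 * N - i) / (N : ℝ) ^ 3) ≤ cbar * (γ * (N : ℝ)⁻¹) := by
      have hpos : 0 ≤ γ * (N : ℝ)⁻¹ := by positivity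
      calc c * (γ * i * (2 * N - i) / (N : ℝ) ^ 3) ≤ c * (γ * (N : ℝ)⁻¹) := by
            apply mul_le_mul_of_nonneg_left hw; linarith
        _ ≤ _ := by gcongr
    have hsum : 2 * γ * (N : ℝ)⁻¹ + cbar * (γ * (N : ℝ)⁻¹) = 1 / 96 * (N : ℝ)⁻¹ := by
      rw [← hγ1]; ring
    have hE := heq i hi1 hi2
    have hsplit : ((N : ℝ) ^ 2 - 1 / 12) *
          (-(e (i - 1) - γ * ((i - 1 : ℕ) : ℝ) * (2 * N - ((i - 1 : ℕ) : ℝ)) / (N : ℝ) ^ 3)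
            + 2 * (e i - γ * i * (2 * N - i) / (N : ℝ) ^ 3)
            - (e (i + 1) - γ * ((i + 1 : ℕ) : ℝ) * (2 * N - ((i + 1 : ℕ) : ℝ)) / (N : ℝ) ^ 3))
          + c * (e i - γ * i * (2 * N - i) / (N : ℝ) ^ 3)
        = (((N : ℝ) ^ 2 - 1 / 12) * (-(e (i - 1)) + 2 * e i - e (i + 1)) + c * e i)
          - ((N : ℝ) ^ 2 - 1 / 12) * (2 * γ / (N : ℝ) ^ 3)
          - c * (γ * i * (2 * N - i) / (N : ℝ) ^ 3) := by
      rw [hcast]; push_cast; ring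
    simp only [hsplit]
    rw [hE]
    linarith
end

section
/- Interpolation error for the square-root singularity on the graded mesh: there is an absolute constant C > 0 such that for every integer N ≥ 1, with grid points x_i = (i/N)⁴ for 0 ≤ i ≤ N and u(x) = x^{1/2} on [0,1], one has for every 0 ≤ i ≤ N−1 and every x ∈ [x_i, x_{i+1}], |u(x) − u^I(x)| ≤ C N^{−2}, where u^I is the piecewise linear interpolant of u on the grid {x_i}. -/
/-!
Put `a = (i/N)²`, `b = ((i+1)/N)²` and `t = √y ∈ [a, b]`, so that the mesh interval is `[a², b²]`.
The interpolation error is exactly `(t - a)(b - t)/(a + b)`, which is at most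
`(b - a)²/(4(a + b))`. Since `(2i+1)² ≤ 2(i² + (i+1)²)`, the grading gives
`(b - a)² ≤ 2(a + b)/N²`, hence the bound with `C = 1/2`.
-/

/-- Exact error, at the point `t²`, of linear interpolation of the square root on `[a², b²]`. -/
lemma sqrt_interp_error (a b t : ℝ) (ha : 0 ≤ a) (hab : a < b) :
    t - (a + (b - a) * (t ^ 2 - a ^ 2) / (b ^ 2 - a ^ 2)) = (t - a) * (b - t) / (a + b) := by
  have h1 : a + b ≠ 0 := by linarith
  have h2 : b - a ≠ 0 := by linarith
  have h3 : b ^ 2 - a ^ 2 = (b - a) * (a + b) := by ring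
  rw [h3, mul_div_mul_left _ _ h2]
  field_simp
  ring

/-- Interpolation error for the square-root singularity on the graded mesh:
there is an absolute constant `C > 0` such that for every `N ≥ 1`, with grid
`x i = (i/N)⁴` and `u x = √x`, the piecewise linear interpolation error on
every mesh interval is at most `C N⁻²`. -/
theorem graded_mesh_interpolation_error :
    ∃ C : ℝ, 0 < C ∧
      ∀ N : ℕ, 1 ≤ N →
      ∀ x : ℕ → ℝ, (∀ i, x i = ((i : ℝ) / N) ^ 4) →
      ∀ u : ℝ → ℝ, u = (fun s => Real.sqrt s) →
      ∀ i ≤ N - 1, ∀ y ∈ Set.Icc (x i) (x (i + 1)),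
        |u y - (u (x i)
            + (u (x (i + 1)) - u (x i)) * (y - x i) / (x (i + 1) - x i))|
          ≤ C * ((N : ℝ) ^ 2)⁻¹ := by
  refine ⟨1 / 2, by norm_num, ?_⟩
  rintro N hN x hx u rfl i - y ⟨hy1, hy2⟩
  have hN0 : (0 : ℝ) < N := by exact_mod_cast hN
  have hi : (0 : ℝ) ≤ i := Nat.cast_nonneg i
  obtain ⟨a, ha⟩ : ∃ a : ℝ, a = ((i : ℝ) / N) ^ 2 := ⟨_, rfl⟩
  obtain ⟨b, hb⟩ : ∃ b : ℝ, b = (((i : ℝ) + 1) / N) ^ 2 := ⟨_, rfl⟩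
  have ha0 : 0 ≤ a := by rw [ha]; positivity
  have hab : a < b := by
    rw [ha, hb]
    gcongr
    linarith
  have hb0 : 0 ≤ b := ha0.trans hab.le
  have hxa : x i = a ^ 2 := by rw [hx, ha]; ring
  have hxb : x (i + 1) = b ^ 2 := by rw [hx, hb]; push_cast; ring
  rw [hxa] at hy1
  rw [hxb] at hy2
  have hta : a ≤ √y := Real.le_sqrt_of_sq_le hy1
  have htb : √y ≤ b := Real.sqrt_le_iff.mpr ⟨hb0, hy2⟩
  have hty : √y ^ 2 = y := Real.sq_sqrt ((sq_nonneg a).trans hy1)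
  have hgrade : (b - a) ^ 2 ≤ 2 * ((N : ℝ) ^ 2)⁻¹ * (a + b) := by
    have h : 2 * ((N : ℝ) ^ 2)⁻¹ * (a + b) - (b - a) ^ 2 = (((N : ℝ) ^ 2)⁻¹) ^ 2 := by
      rw [ha, hb]
      field_simp
      ring
    have := sq_nonneg (((N : ℝ) ^ 2)⁻¹)
    linarith
  have herr := sqrt_interp_error a b (√y) ha0 hab
  rw [hty] at herr
  simp only [hxa, hxb, Real.sqrt_sq ha0, Real.sqrt_sq hb0]
  rw [herr, abs_of_nonneg (div_nonneg (mul_nonneg (by linarith) (by linarith)) (by linarith)),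
    div_le_iff₀ (by linarith)]
  -- `4 (t - a)(b - t) = (b - a)² - (2t - a - b)²`
  have hpos : 0 ≤ ((N : ℝ) ^ 2)⁻¹ * (a + b) := by positivity
  nlinarith [sq_nonneg (2 * √y - a - b)]
end
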